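/- arXiv:1903.02952 — 7 statements merged into one kernel-verified Lean document; each statement's English description precedes it below -/
import Mathlib

section
/- Let R be a Leibniz conformal algebra, Q a ℂ[∂]-module, and Ω(R,Q) an extending datum in which ↼_λ, ⇀_λ, ◁_λ and ▷_λ are all trivial, written Ω(R,Q) = (f_λ, {·_λ·}). Then Ω(R,Q) is a Leibniz conformal extending structure (equivalently, the bracket [(a,x)_λ (b,y)] = ([a_λ b] + f_λ(x,y), {x_λ y}) makes R × Q a Leibniz conformal algebra, the twisted product R♮_f Q) if and only if (Q, {·_λ·}) is a Leibniz conformal algebra and f_λ satisfies, for all a ∈ R and x,y,z ∈ Q: [a_λ f_μ(x,y)] = 0, [f_λ(x,y)_{λ+μ} a] = 0, and f_{λ+μ}({x_λ y}, z) + f_μ(y, {x_λ z}) − f_λ(x, {y_μ z}) = 0. -/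
noncomputable section

/-- `g : ℂ → R` is (the evaluation of) a polynomial in `λ` with coefficients in `R`,
i.e. an element of `R[λ]`. -/
def IsPolyFun {R : Type*} [AddCommGroup R] [Module ℂ R] (g : ℂ → R) : Prop :=
  ∃ (N : ℕ) (c : ℕ → R), ∀ l : ℂ, g l = ∑ i ∈ Finset.range N, l ^ i • c i

/-- A conformal bilinear map `U × V → W[λ]`, in evaluated form: `f_λ(∂u, v) = -λ f_λ(u,v)`
and `f_λ(u, ∂v) = (∂ + λ) f_λ(u,v)`. -/
structure IsConformalBilin {U V W : Type*}
    [AddCommGroup U] [Module ℂ U] [AddCommGroup V] [Module ℂ V]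
    [AddCommGroup W] [Module ℂ W]
    (DU : Module.End ℂ U) (DV : Module.End ℂ V) (DW : Module.End ℂ W)
    (f : ℂ → U → V → W) : Prop where
  add_left : ∀ (l : ℂ) (a a' : U) (b : V), f l (a + a') b = f l a b + f l a' b
  smul_left : ∀ (l c : ℂ) (a : U) (b : V), f l (c • a) b = c • f l a b
  add_right : ∀ (l : ℂ) (a : U) (b b' : V), f l a (b + b') = f l a b + f l a b'
  smul_right : ∀ (l c : ℂ) (a : U) (b : V), f l a (c • b) = c • f l a b
  poly : ∀ (a : U) (b : V), IsPolyFun (fun l => f l a b)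
  conf_left : ∀ (l : ℂ) (a : U) (b : V), f l (DU a) b = (-l) • f l a b
  conf_right : ∀ (l : ℂ) (a : U) (b : V), f l a (DV b) = DW (f l a b) + l • f l a b

/-- A Leibniz conformal algebra structure on the `ℂ[∂]`-module `(R, D)`:
a conformal bilinear `λ`-bracket satisfying the Jacobi identity. -/
structure IsLeibnizConformal {R : Type*} [AddCommGroup R] [Module ℂ R]
    (D : Module.End ℂ R) (br : ℂ → R → R → R) : Prop where
  bilin : IsConformalBilin D D D br
  jacobi : ∀ (l m : ℂ) (a b c : R),
    br l a (br m b c) = br (l + m) (br l a b) c + br m b (br l a c)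

/-- An extending datum `Ω(R,Q) = (↼, ⇀, ◁, ▷, f, {·_λ·})` of a Leibniz conformal algebra
`R` by a `ℂ[∂]`-module `Q`: six conformal bilinear maps.  Here `lh = ↼`, `rh = ⇀`,
`lt = ◁`, `rt = ▷`, `fm = f`, `bq = {·_λ·}`. -/
structure IsExtendingDatum {R Q : Type*}
    [AddCommGroup R] [Module ℂ R] [AddCommGroup Q] [Module ℂ Q]
    (DR : Module.End ℂ R) (DQ : Module.End ℂ Q)
    (lh : ℂ → R → Q → R) (rh : ℂ → R → Q → Q)
    (lt : ℂ → Q → R → Q) (rt : ℂ → Q → R → R)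
    (fm : ℂ → Q → Q → R) (bq : ℂ → Q → Q → Q) : Prop where
  lh_bilin : IsConformalBilin DR DQ DR lh
  rh_bilin : IsConformalBilin DR DQ DQ rh
  lt_bilin : IsConformalBilin DQ DR DQ lt
  rt_bilin : IsConformalBilin DQ DR DR rt
  fm_bilin : IsConformalBilin DQ DQ DR fm
  bq_bilin : IsConformalBilin DQ DQ DQ bq

/-- The unified product bracket on `R × Q`:
`[(a,x)_λ (b,y)] = ([a_λ b] + a↼_λ y + x▷_λ b + f_λ(x,y), a⇀_λ y + x◁_λ b + {x_λ y})`. -/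
def unifiedBracket {R Q : Type*}
    [AddCommGroup R] [Module ℂ R] [AddCommGroup Q] [Module ℂ Q]
    (br : ℂ → R → R → R)
    (lh : ℂ → R → Q → R) (rh : ℂ → R → Q → Q)
    (lt : ℂ → Q → R → Q) (rt : ℂ → Q → R → R)
    (fm : ℂ → Q → Q → R) (bq : ℂ → Q → Q → Q) :
    ℂ → R × Q → R × Q → R × Q :=
  fun l p q =>
    (br l p.1 q.1 + lh l p.1 q.2 + rt l p.2 q.1 + fm l p.2 q.2,
     rh l p.1 q.2 + lt l p.2 q.1 + bq l p.2 q.2)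

/-- Zero on the left. -/
theorem IsConformalBilin.zl {U V W : Type*}
    [AddCommGroup U] [Module ℂ U] [AddCommGroup V] [Module ℂ V]
    [AddCommGroup W] [Module ℂ W]
    {DU : Module.End ℂ U} {DV : Module.End ℂ V} {DW : Module.End ℂ W}
    {f : ℂ → U → V → W} (h : IsConformalBilin DU DV DW f) (l : ℂ) (b : V) : f l 0 b = 0 := by
  simpa using h.smul_left l 0 0 b

/-- Zero on the right. -/
theorem IsConformalBilin.zr {U V W : Type*}
    [AddCommGroup U] [Module ℂ U] [AddCommGroup V] [Module ℂ V]
    [AddCommGroup W] [Module ℂ W]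
    {DU : Module.End ℂ U} {DV : Module.End ℂ V} {DW : Module.End ℂ W}
    {f : ℂ → U → V → W} (h : IsConformalBilin DU DV DW f) (l : ℂ) (a : U) : f l a 0 = 0 := by
  simpa using h.smul_right l 0 a 0

theorem IsPolyFun.ext_range {R : Type*} [AddCommGroup R] [Module ℂ R] {g : ℂ → R}
    (h : IsPolyFun g) : ∃ (N : ℕ) (c : ℕ → R), ∀ M, N ≤ M → ∀ l : ℂ,
      g l = ∑ i ∈ Finset.range M, l ^ i • c i := by
  obtain ⟨N, c, hc⟩ := h
  refine ⟨N, fun i => if i < N then c i else 0, fun M hM l => ?_⟩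
  rw [hc, ← Finset.sum_subset (Finset.range_mono hM)]
  · refine Finset.sum_congr rfl fun i hi => ?_
    simp [Finset.mem_range.1 hi]
  · intro i _ hi
    simp only [Finset.mem_range] at hi
    simp [hi]

theorem IsPolyFun.add' {R : Type*} [AddCommGroup R] [Module ℂ R] {g h : ℂ → R}
    (hg : IsPolyFun g) (hh : IsPolyFun h) : IsPolyFun (fun l => g l + h l) := by
  obtain ⟨N, c, hc⟩ := hg.ext_range
  obtain ⟨M, d, hd⟩ := hh.ext_range
  refine ⟨max N M, fun i => c i + d i, fun l => ?_⟩
  simp only [smul_add, Finset.sum_add_distrib]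
  rw [← hc _ (le_max_left _ _), ← hd _ (le_max_right _ _)]

theorem IsPolyFun.prod' {R Q : Type*} [AddCommGroup R] [Module ℂ R]
    [AddCommGroup Q] [Module ℂ Q] {g : ℂ → R} {h : ℂ → Q}
    (hg : IsPolyFun g) (hh : IsPolyFun h) : IsPolyFun (fun l => (g l, h l)) := by
  obtain ⟨N, c, hc⟩ := hg.ext_range
  obtain ⟨M, d, hd⟩ := hh.ext_range
  refine ⟨max N M, fun i => (c i, d i), fun l => ?_⟩
  beta_reduce
  rw [hc _ (le_max_left N M), hd _ (le_max_right N M)]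
  ext <;> simp [Prod.fst_sum, Prod.snd_sum]

/-- For an extending datum with `↼, ⇀, ◁, ▷` trivial, the twisted product
bracket `[(a,x)_λ (b,y)] = ([a_λ b] + f_λ(x,y), {x_λ y})` makes `R × Q` a Leibniz
conformal algebra if and only if `(Q, {·_λ·})` is a Leibniz conformal algebra and
`f` satisfies the twisted cocycle conditions. -/
theorem twisted_product_isLeibnizConformal_iff
    {R Q : Type*} [AddCommGroup R] [Module ℂ R] [AddCommGroup Q] [Module ℂ Q]
    (DR : Module.End ℂ R) (DQ : Module.End ℂ Q)
    (br : ℂ → R → R → R) (hLeib : IsLeibnizConformal DR br)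
    (fm : ℂ → Q → Q → R) (bq : ℂ → Q → Q → Q)
    (hfm : IsConformalBilin DQ DQ DR fm) (hbq : IsConformalBilin DQ DQ DQ bq) :
    IsLeibnizConformal (LinearMap.prodMap DR DQ)
      (unifiedBracket br (fun _ _ _ => 0) (fun _ _ _ => 0) (fun _ _ _ => 0)
        (fun _ _ _ => 0) fm bq) ↔
    (IsLeibnizConformal DQ bq ∧
     (∀ (l m : ℂ) (a : R) (x y : Q), br l a (fm m x y) = 0) ∧
     (∀ (l m : ℂ) (a : R) (x y : Q), br (l + m) (fm l x y) a = 0) ∧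
     (∀ (l m : ℂ) (x y z : Q),
        fm (l + m) (bq l x y) z + fm m y (bq l x z) - fm l x (bq m y z) = 0)) := by
  have hb := hLeib.bilin
  constructor
  · intro h
    have J := h.jacobi
    simp only [unifiedBracket, add_zero, zero_add] at J
    refine ⟨⟨hbq, fun l m x y z => ?_⟩, fun l m a x y => ?_, fun l m a x y => ?_,
      fun l m x y z => ?_⟩
    · simpa using congrArg Prod.snd (J l m (0, x) (0, y) (0, z))
    · simpa [hb.zl, hb.zr, hfm.zl, hfm.zr, hbq.zl, hbq.zr] using
        congrArg Prod.fst (J l m (a, 0) (0, x) (0, y))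
    · simpa [hb.zl, hb.zr, hfm.zl, hfm.zr, hbq.zl, hbq.zr] using
        (congrArg Prod.fst (J l m (0, x) (0, y) (a, 0))).symm
    · have := congrArg Prod.fst (J l m (0, x) (0, y) (0, z))
      simp [hb.zl, hb.zr] at this
      rw [this, sub_eq_zero]
  · rintro ⟨hQ, h1, h2, h3⟩
    refine ⟨⟨?_, ?_, ?_, ?_, ?_, ?_, ?_⟩, ?_⟩
    · intro l a a' b
      ext <;> simp [unifiedBracket, hb.add_left, hfm.add_left, hbq.add_left]
      abel
    · intro l c a b
      ext <;> simp [unifiedBracket, hb.smul_left, hfm.smul_left, hbq.smul_left]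
    · intro l a b b'
      ext <;> simp [unifiedBracket, hb.add_right, hfm.add_right, hbq.add_right]
      abel
    · intro l c a b
      ext <;> simp [unifiedBracket, hb.smul_right, hfm.smul_right, hbq.smul_right]
    · intro a b
      simp only [unifiedBracket, add_zero, zero_add]
      exact ((hb.poly _ _).add' (hfm.poly _ _)).prod' (hbq.poly _ _)
    · intro l a b
      ext <;> simp [unifiedBracket, hb.conf_left, hfm.conf_left, hbq.conf_left]
      abel
    · intro l a b
      ext <;> simp [unifiedBracket, hb.conf_right, hfm.conf_right, hbq.conf_right]
      abel
    · intro l m a b c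
      ext
      · simp only [unifiedBracket, add_zero, zero_add, Prod.fst_add, hb.add_right,
          hb.add_left, h1, h2, hLeib.jacobi l m a.1 b.1 c.1]
        rw [← sub_eq_zero.1 (h3 l m a.2 b.2 c.2)]
        abel
      · simpa [unifiedBracket] using hQ.jacobi l m a.2 b.2 c.2
end
end

section
/- Let R be a Leibniz conformal algebra whose left-center is trivial or whose right-center is trivial. Then for any Leibniz conformal algebra Q, every twisted product R♮_f Q of R and Q is trivial, i.e. f_λ = 0 (so R♮_f Q is the direct sum of R and Q). -/
noncomputable section

/-- If the Leibniz conformal algebra `R` has trivial left-center or trivial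
right-center, then every twisted product `R ♮_f Q` with a Leibniz conformal algebra `Q`
is trivial, i.e. `f = 0`. -/
theorem twisted_product_trivial_of_trivial_center
    {R Q : Type*} [AddCommGroup R] [Module ℂ R] [AddCommGroup Q] [Module ℂ Q]
    (DR : Module.End ℂ R) (DQ : Module.End ℂ Q)
    (br : ℂ → R → R → R) (hLeib : IsLeibnizConformal DR br)
    (hcenter :
      (∀ a : R, (∀ (l : ℂ) (b : R), br l a b = 0) → a = 0) ∨
      (∀ a : R, (∀ (l : ℂ) (b : R), br l b a = 0) → a = 0))
    (bq : ℂ → Q → Q → Q) (hbq : IsLeibnizConformal DQ bq)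
    (fm : ℂ → Q → Q → R) (hfm : IsConformalBilin DQ DQ DR fm)
    (htwisted : IsLeibnizConformal (LinearMap.prodMap DR DQ)
      (unifiedBracket br (fun _ _ _ => 0) (fun _ _ _ => 0) (fun _ _ _ => 0)
        (fun _ _ _ => 0) fm bq)) :
    ∀ (l : ℂ) (x y : Q), fm l x y = 0 := by
  have z1 : ∀ l b, br l 0 b = 0 := fun l b => by
    simpa using hLeib.bilin.smul_left l 0 0 b
  have z2 : ∀ l b, br l b 0 = 0 := fun l b => by
    simpa using hLeib.bilin.smul_right l 0 b 0
  have q1 : ∀ l b, bq l 0 b = 0 := fun l b => by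
    simpa using hbq.bilin.smul_left l 0 0 b
  have q2 : ∀ l b, bq l b 0 = 0 := fun l b => by
    simpa using hbq.bilin.smul_right l 0 b 0
  have f1 : ∀ l b, fm l 0 b = 0 := fun l b => by
    simpa using hfm.smul_left l 0 0 b
  have f2 : ∀ l b, fm l b 0 = 0 := fun l b => by
    simpa using hfm.smul_right l 0 b 0
  intro l x y
  rcases hcenter with h | h
  · apply h
    intro m c
    have := congrArg Prod.fst (htwisted.jacobi l (m - l) (0, x) (0, y) (c, 0))
    simpa [unifiedBracket, z1, z2, q1, q2, f1, f2] using this.symm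
  · apply h
    intro m c
    have := congrArg Prod.fst (htwisted.jacobi m l (c, 0) (0, x) (0, y))
    simpa [unifiedBracket, z1, z2, q1, q2, f1, f2] using this
end
end

section
/- Let R be a Leibniz conformal algebra, Q a ℂ[∂]-module, and set E = R ⊕ Q (direct sum of ℂ[∂]-modules). Suppose E is a Leibniz conformal algebra such that R is a bi-sided ideal of E (i.e. [R_λ E] ⊆ R[λ] and [E_λ R] ⊆ R[λ]). Then E is isomorphic, via an isomorphism stabilizing R and co-stabilizing Q, to a crossed product R♮^f_{▷,↼} Q. -/
noncomputable section

theorem IsConformalBilin.transport {U V W E : Type*}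
    [AddCommGroup U] [Module ℂ U] [AddCommGroup V] [Module ℂ V]
    [AddCommGroup W] [Module ℂ W] [AddCommGroup E] [Module ℂ E]
    {DU : Module.End ℂ U} {DV : Module.End ℂ V} {DW : Module.End ℂ W} {DE : Module.End ℂ E}
    {f : ℂ → E → E → E} (h : IsConformalBilin DE DE DE f)
    (i : U →ₗ[ℂ] E) (j : V →ₗ[ℂ] E) (p : E →ₗ[ℂ] W)
    (hi : ∀ u, i (DU u) = DE (i u)) (hj : ∀ u, j (DV u) = DE (j u))
    (hp : ∀ e, p (DE e) = DW (p e)) :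
    IsConformalBilin DU DV DW (fun l u v => p (f l (i u) (j v))) where
  add_left l a a' b := by simp [h.add_left]
  smul_left l c a b := by simp [h.smul_left]
  add_right l a b b' := by simp [h.add_right]
  smul_right l c a b := by simp [h.smul_right]
  poly a b := by
    obtain ⟨N, c, hc⟩ := h.poly (i a) (j b)
    refine ⟨N, fun k => p (c k), fun l => ?_⟩
    have := hc l
    simp only at this
    simp [this]
  conf_left l a b := by simp only [hi, h.conf_left, map_smul]
  conf_right l a b := by simp only [hj, h.conf_right, map_add, map_smul, hp]

/-- If `E = R ⊕ Q` is a Leibniz conformal algebra such that `R` is a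
bi-sided ideal of `E`, then `E` is isomorphic (via an isomorphism stabilizing `R` and
co-stabilizing `Q`, here the identity) to a crossed product `R ♮^f_{▷,↼} Q`. -/
theorem isomorphic_to_crossed_product_of_bisided_ideal
    {R Q : Type*} [AddCommGroup R] [Module ℂ R] [AddCommGroup Q] [Module ℂ Q]
    (DR : Module.End ℂ R) (DQ : Module.End ℂ Q)
    (br : ℂ → R → R → R) (hLeib : IsLeibnizConformal DR br)
    (brE : ℂ → R × Q → R × Q → R × Q)
    (hE : IsLeibnizConformal (LinearMap.prodMap DR DQ) brE)
    (hsub : ∀ (l : ℂ) (a b : R), brE l (a, 0) (b, 0) = (br l a b, 0))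
    (hidealL : ∀ (l : ℂ) (a : R) (u : R × Q), (brE l (a, 0) u).2 = 0)
    (hidealR : ∀ (l : ℂ) (u : R × Q) (a : R), (brE l u (a, 0)).2 = 0) :
    ∃ (lh : ℂ → R → Q → R) (rt : ℂ → Q → R → R)
      (fm : ℂ → Q → Q → R) (bq : ℂ → Q → Q → Q),
      IsConformalBilin DR DQ DR lh ∧ IsConformalBilin DQ DR DR rt ∧
      IsConformalBilin DQ DQ DR fm ∧ IsConformalBilin DQ DQ DQ bq ∧
      IsLeibnizConformal DQ bq ∧
      IsLeibnizConformal (LinearMap.prodMap DR DQ)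
        (unifiedBracket br lh (fun _ _ _ => 0) (fun _ _ _ => 0) rt fm bq) ∧
      ∀ (l : ℂ) (u v : R × Q),
        unifiedBracket br lh (fun _ _ _ => 0) (fun _ _ _ => 0) rt fm bq l u v
          = brE l u v := by
  have hB := hE.bilin
  have hdec : ∀ u : R × Q, u = (u.1, 0) + (0, u.2) := fun u => by simp
  have key : ∀ (l : ℂ) (u v : R × Q),
      brE l u v = (br l u.1 v.1, 0) + brE l (u.1, 0) (0, v.2) + brE l (0, u.2) (v.1, 0)
        + brE l (0, u.2) (0, v.2) := by
    intro l u v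
    conv_lhs => rw [hdec u, hdec v]
    rw [hB.add_left, hB.add_right, hB.add_right, hsub]
    abel
  have key2 : ∀ (l : ℂ) (u v : R × Q), (brE l u v).2 = (brE l (0, u.2) (0, v.2)).2 := by
    intro l u v
    rw [key l u v]
    simp [hidealL, hidealR]
  have hU : ∀ (l : ℂ) (u v : R × Q),
      unifiedBracket br (fun l a y => (brE l (a, 0) (0, y)).1) (fun _ _ _ => 0) (fun _ _ _ => 0)
        (fun l x b => (brE l (0, x) (b, 0)).1) (fun l x y => (brE l (0, x) (0, y)).1)
        (fun l x y => (brE l (0, x) (0, y)).2) l u v = brE l u v := by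
    intro l u v
    rw [key l u v]
    ext <;> simp [unifiedBracket, hidealL, hidealR]
  have hq : IsConformalBilin DQ DQ DQ (fun l x y => (brE l (0, x) (0, y)).2) :=
    hB.transport (LinearMap.inr ℂ R Q) (LinearMap.inr ℂ R Q) (LinearMap.snd ℂ R Q)
      (by simp) (by simp) (by simp)
  refine ⟨fun l a y => (brE l (a, 0) (0, y)).1, fun l x b => (brE l (0, x) (b, 0)).1,
    fun l x y => (brE l (0, x) (0, y)).1, fun l x y => (brE l (0, x) (0, y)).2,
    hB.transport (LinearMap.inl ℂ R Q) (LinearMap.inr ℂ R Q) (LinearMap.fst ℂ R Q)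
      (by simp) (by simp) (by simp),
    hB.transport (LinearMap.inr ℂ R Q) (LinearMap.inl ℂ R Q) (LinearMap.fst ℂ R Q)
      (by simp) (by simp) (by simp),
    hB.transport (LinearMap.inr ℂ R Q) (LinearMap.inr ℂ R Q) (LinearMap.fst ℂ R Q)
      (by simp) (by simp) (by simp), hq, ⟨hq, ?_⟩, ?_, hU⟩
  · intro l m a b c
    have h := congrArg Prod.snd (hE.jacobi l m (0, a) (0, b) (0, c))
    rw [Prod.snd_add, key2 l (0, a), key2 (l + m) _ (0, c), key2 m (0, b) (brE l _ _)] at h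
    exact h
  · have : unifiedBracket br (fun l a y => (brE l (a, 0) (0, y)).1) (fun _ _ _ => 0)
        (fun _ _ _ => 0)
        (fun l x b => (brE l (0, x) (b, 0)).1) (fun l x y => (brE l (0, x) (0, y)).1)
        (fun l x y => (brE l (0, x) (0, y)).2) = brE := by
      funext l u v
      exact hU l u v
    rw [this]
    exact hE
end
end

section
/- Let R be a Leibniz conformal algebra with trivial left-center. Then for any flag datum (D_λ, T_λ, Q₀(λ,∂), P(λ,∂)) ∈ FC(R), one has D_{−λ−∂} = −T_λ, i.e. D_{−λ−∂}(a) = −T_λ(a) for all a ∈ R. -/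
noncomputable section

open Polynomial in
/-- The polynomial ring `ℂ[λ, ∂]`, realized as `(ℂ[∂])[λ]`: the *outer* variable is `λ`
and the *inner* variable is `∂`. -/
abbrev CPoly2 : Type := Polynomial (Polynomial ℂ)

open Polynomial in
/-- Substitute `λ := lam` and `∂ := del` (simultaneously) in `p ∈ ℂ[λ,∂]`; the result is a
polynomial in the remaining formal variable. -/
noncomputable def sub2 (p : CPoly2) (lam del : Polynomial ℂ) : Polynomial ℂ :=
  Polynomial.eval₂ (Polynomial.aeval del).toRingHom lam p

open Polynomial in
/-- Evaluate `p ∈ ℂ[λ,∂]` at `λ := lam`, `∂ := del` with `lam del : ℂ`. -/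
noncomputable def ev2 (p : CPoly2) (lam del : ℂ) : ℂ :=
  (p.eval (Polynomial.C lam)).eval del

open Polynomial in
/-- Substitute `λ := -λ - ∂` in `p ∈ ℂ[λ,∂]` (a formal substitution inside `ℂ[λ,∂]`). -/
noncomputable def twistL (p : CPoly2) : CPoly2 :=
  Polynomial.eval₂ (Polynomial.C : Polynomial ℂ →+* CPoly2)
    (-(Polynomial.X : CPoly2) - Polynomial.C Polynomial.X) p

/-- `IsNegShift D g g'` encodes, for polynomial functions `ℂ → R`, the formal identity
`g'(λ) = g(-λ-∂)`: there are coefficients `c i` of `g` such that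
`g' l = ∑ (-l - ∂)^i (c i)`, where `∂` acts via `D`. -/
def IsNegShift {R : Type*} [AddCommGroup R] [Module ℂ R] (D : Module.End ℂ R)
    (g g' : ℂ → R) : Prop :=
  ∃ (N : ℕ) (c : ℕ → R),
    (∀ l : ℂ, g l = ∑ i ∈ Finset.range N, l ^ i • c i) ∧
    (∀ l : ℂ, g' l = ∑ i ∈ Finset.range N,
      ((((-l) • (1 : Module.End ℂ R) - D)) ^ i) (c i))

open Polynomial

/-- The data of a 4-tuple `(D_λ, T_λ, Q₀(λ,∂), P(λ,∂))` on `R`: `Dm` is a left conformal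
linear map, `Tm` is a conformal linear map, `Q₀ ∈ R[λ]` and `P ∈ ℂ[λ,∂]`. -/
structure FCData (R : Type*) [AddCommGroup R] [Module ℂ R] (DR : Module.End ℂ R) where
  Dm : ℂ → R → R
  Tm : ℂ → R → R
  Q0 : ℂ → R
  P : CPoly2
  Dm_lin : ∀ l : ℂ, IsLinearMap ℂ (Dm l)
  Dm_poly : ∀ a : R, IsPolyFun (fun l => Dm l a)
  Dm_conf : ∀ (l : ℂ) (a : R), Dm l (DR a) = (-l) • Dm l a
  Tm_lin : ∀ l : ℂ, IsLinearMap ℂ (Tm l)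
  Tm_poly : ∀ a : R, IsPolyFun (fun l => Tm l a)
  Tm_conf : ∀ (l : ℂ) (a : R), Tm l (DR a) = DR (Tm l a) + l • Tm l a
  Q0_poly : IsPolyFun Q0

/-- The conditions (fc1)–(fc8) defining the set `FC(R)` of flag datums
`(D_λ, T_λ, Q₀(λ,∂), P(λ,∂))` used for crossed products. -/
def IsFC {R : Type*} [AddCommGroup R] [Module ℂ R] (DR : Module.End ℂ R)
    (br : ℂ → R → R → R) (F : FCData R DR) : Prop :=
  -- (fc1)
  (∀ (l m : ℂ) (a b : R),
    F.Dm (l + m) (br l a b) = br l a (F.Dm m b) - br m b (F.Dm l a)) ∧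
  -- (fc2)
  (∀ (l m : ℂ) (a b : R),
    F.Tm m (br l a b) = br l a (F.Tm m b) - br (l + m) (F.Dm l a) b) ∧
  -- (fc3)
  (∀ (l m : ℂ) (a b : R),
    F.Tm m (br l a b) = br l a (F.Tm m b) + br (l + m) (F.Tm m a) b) ∧
  -- (fc4)
  (∀ (l m : ℂ) (a : R),
    Polynomial.aeval DR (sub2 F.P (Polynomial.C m) (Polynomial.C l + Polynomial.X))
        (F.Dm l a)
      = F.Dm (l + m) (F.Dm l a) + F.Tm m (F.Dm l a) - br l a (F.Q0 m)) ∧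
  -- (fc5)
  (∀ (l m : ℂ) (a : R), F.Dm (l + m) (F.Tm m a) + F.Dm (l + m) (F.Dm l a) = 0) ∧
  -- (fc6)
  (∀ l m : ℂ,
    ev2 F.P l (-l - m) • sub2 F.P (Polynomial.C (l + m)) Polynomial.X
      + sub2 F.P (Polynomial.C l) (Polynomial.C m + Polynomial.X)
          * sub2 F.P (Polynomial.C m) Polynomial.X
      - sub2 F.P (Polynomial.C m) (Polynomial.C l + Polynomial.X)
          * sub2 F.P (Polynomial.C l) Polynomial.X = 0) ∧
  -- (fc7)
  (∀ (l m : ℂ) (a : R),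
    ev2 F.P l (-l - m) • F.Tm (l + m) a
      = F.Tm l (F.Tm m a) - br (l + m) (F.Q0 l) a - F.Tm m (F.Tm l a)) ∧
  -- (fc8)
  (∀ l m : ℂ,
    F.Tm l (F.Q0 m)
      = F.Dm (l + m) (F.Q0 l) + ev2 F.P l (-l - m) • F.Q0 (l + m) + F.Tm m (F.Q0 l)
        + Polynomial.aeval DR
            (sub2 F.P (Polynomial.C l) (Polynomial.C m + Polynomial.X)) (F.Q0 m)
        - Polynomial.aeval DR
            (sub2 F.P (Polynomial.C m) (Polynomial.C l + Polynomial.X)) (F.Q0 l))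

/-- If the Leibniz conformal algebra `R` has trivial left-center, then every
flag datum `(D_λ, T_λ, Q₀, P) ∈ FC(R)` satisfies `D_{-λ-∂} = -T_λ`. -/
theorem fc_neg_shift_of_trivial_left_center
    {R : Type*} [AddCommGroup R] [Module ℂ R] (DR : Module.End ℂ R)
    (br : ℂ → R → R → R) (hLeib : IsLeibnizConformal DR br)
    (hcenter : ∀ a : R, (∀ (l : ℂ) (b : R), br l a b = 0) → a = 0)
    (F : FCData R DR) (hF : IsFC DR br F) :
    ∀ a : R, IsNegShift DR (fun l => F.Dm l a) (fun l => -(F.Tm l a)) := by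
  intro a
  obtain ⟨N, c, hc⟩ := F.Dm_poly a
  obtain ⟨-, h2, h3, -⟩ := hF
  have B := hLeib.bilin
  refine ⟨N, c, hc, fun m => ?_⟩
  have hpow : ∀ (n : ℂ) (b : R) (i : ℕ) (x : R),
      br n ((((-m) • (1 : Module.End ℂ R) - DR) ^ i) x) b = (n - m) ^ i • br n x b := by
    intro n b i
    induction i with
    | zero => intro x; simp
    | succ k ih =>
      intro x
      have hx : ((-m) • (1 : Module.End ℂ R) - DR) x = (-m) • x + (-1 : ℂ) • DR x := by
        simp [sub_eq_add_neg]
      rw [pow_succ, Module.End.mul_apply, ih, hx, B.add_left, B.smul_left, B.smul_left,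
        B.conf_left, pow_succ]
      module
  have hsum : ∀ (n : ℂ) (b : R) (f : ℕ → R),
      br n (∑ i ∈ Finset.range N, f i) b = ∑ i ∈ Finset.range N, br n (f i) b := by
    intro n b f
    let φ : R →+ R := AddMonoidHom.mk' (fun x => br n x b) (fun x y => B.add_left n x y b)
    exact map_sum φ f _
  have key : F.Tm m a + ∑ i ∈ Finset.range N,
      ((((-m) • (1 : Module.End ℂ R) - DR)) ^ i) (c i) = 0 := by
    apply hcenter
    intro n b
    have e : br n (F.Tm m a) b + br n (F.Dm (n - m) a) b = 0 := by
      have e2 := h2 (n - m) m a b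
      rw [h3 (n - m) m a b, sub_add_cancel, sub_eq_add_neg (br (n - m) a (F.Tm m b))] at e2
      rw [add_left_cancel e2, neg_add_cancel]
    have hc' : F.Dm (n - m) a = ∑ i ∈ Finset.range N, (n - m) ^ i • c i := hc (n - m)
    rw [B.add_left, hsum]
    simp only [hpow]
    rw [hc', hsum] at e
    simp only [B.smul_left] at e
    exact e
  exact neg_eq_of_add_eq_zero_right key
end
end

section
/- Let R = ℂ[∂]V be a Leibniz conformal algebra with trivial left-center and Q = ℂ[∂]x a free ℂ[∂]-module of rank 1. Then two flag datums (D_λ, T_λ, Q₀(λ,∂), P(λ,∂)) and (D'_λ, T'_λ, Q₀'(λ,∂), P'(λ,∂)) in FC(R) are equivalent (≡) if and only if there exist u₀ ∈ R and β ∈ ℂ∖{0} such that T_λ(a) = [u₀ _λ a] + βT'_λ(a) for all a ∈ R, P(λ,∂) = βP'(λ,∂), and [a_λ u₀] = −[u₀ _{−λ−∂} a] for all a ∈ R. Moreover, they are cohomologous (≈) if and only if there exists u₀ ∈ R such that these conditions hold with β = 1. -/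
noncomputable section

open Polynomial

/-- The flag datum `(D,T,Q₀,P)` is obtained from `(D',T',Q₀',P')` via the pair
`(u₀, β)` — the equivalence relation on `FC(R)` for crossed products. -/
def FCEquivVia {R : Type*} [AddCommGroup R] [Module ℂ R] (DR : Module.End ℂ R)
    (br : ℂ → R → R → R) (F F' : FCData R DR) (u₀ : R) (β : ℂ) : Prop :=
  (∀ (l : ℂ) (a : R), F.Dm l a = br l a u₀ + β • F'.Dm l a) ∧
  (∀ (l : ℂ) (a : R), F.Tm l a = br l u₀ a + β • F'.Tm l a) ∧
  (F.P = β • F'.P) ∧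
  (∀ l : ℂ, F.Q0 l
      = br l u₀ u₀ + β • F'.Dm l u₀ + β • F'.Tm l u₀ + β ^ 2 • F'.Q0 l
        - Polynomial.aeval DR (sub2 F.P (Polynomial.C l) Polynomial.X) u₀)


section FCHelpers
variable {R : Type*} [AddCommGroup R] [Module ℂ R] {DR : Module.End ℂ R} {br : ℂ → R → R → R}

def brL (h : IsLeibnizConformal DR br) (n : ℂ) (b : R) : R →ₗ[ℂ] R where
  toFun a := br n a b
  map_add' x y := h.bilin.add_left n x y b
  map_smul' c x := h.bilin.smul_left n c x b

def brR (h : IsLeibnizConformal DR br) (n : ℂ) (a : R) : R →ₗ[ℂ] R where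
  toFun b := br n a b
  map_add' x y := h.bilin.add_right n a x y
  map_smul' c x := h.bilin.smul_right n c a x

theorem br_pow (h : IsLeibnizConformal DR br) (n l : ℂ) (b : R) (i : ℕ) (u : R) :
    br n ((((-l) • (1 : Module.End ℂ R) - DR) ^ i) u) b = (n - l) ^ i • br n u b := by
  induction i generalizing u with
  | zero => simp
  | succ i ih =>
    rw [pow_succ, Module.End.mul_apply, ih]
    have e : br n (((-l) • (1 : Module.End ℂ R) - DR) u) b = (n - l) • br n u b := by
      change brL h n b _ = _
      simp only [LinearMap.sub_apply, LinearMap.smul_apply, Module.End.one_apply, map_sub,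
        map_smul]
      change (-l) • br n u b - br n (DR u) b = _
      rw [h.bilin.conf_left]
      module
    rw [e, smul_smul, pow_succ]

theorem br_aeval (h : IsLeibnizConformal DR br) (n : ℂ) (b u : R) (p : Polynomial ℂ) :
    br n (Polynomial.aeval DR p u) b = p.eval (-n) • br n u b := by
  induction p using Polynomial.induction_on generalizing u with
  | C a => simp [Module.algebraMap_end_apply, h.bilin.smul_left]
  | add p q hp hq =>
    rw [map_add, LinearMap.add_apply, h.bilin.add_left, hp, hq, Polynomial.eval_add, add_smul]
  | monomial k a ih =>
    rw [pow_succ, ← mul_assoc, map_mul, Module.End.mul_apply, ih, Polynomial.aeval_X,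
      h.bilin.conf_left, smul_smul, Polynomial.eval_mul_X]

theorem sum_negShift (h : IsLeibnizConformal DR br) (N : ℕ) (c : ℕ → R) (l n : ℂ) (b : R) :
    br n (∑ i ∈ Finset.range N, ((((-l) • (1 : Module.End ℂ R) - DR)) ^ i) (c i)) b
      = br n (∑ i ∈ Finset.range N, (n - l) ^ i • c i) b := by
  change brL h n b _ = brL h n b _
  simp only [map_sum, map_smul]
  exact Finset.sum_congr rfl fun i _ => br_pow h n l b i (c i)

theorem center_ext (h : IsLeibnizConformal DR br)
    (hcenter : ∀ a : R, (∀ (l : ℂ) (b : R), br l a b = 0) → a = 0) {x y : R}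
    (hxy : ∀ (l : ℂ) (b : R), br l x b = br l y b) : x = y := by
  rw [← sub_eq_zero]
  apply hcenter
  intro l b
  change brL h l b _ = 0
  rw [map_sub, sub_eq_zero]
  exact hxy l b

theorem negShift_iff (h : IsLeibnizConformal DR br)
    (hcenter : ∀ a : R, (∀ (l : ℂ) (b : R), br l a b = 0) → a = 0) {g g' : ℂ → R}
    (hg : IsPolyFun g) :
    IsNegShift DR g g' ↔ ∀ (l n : ℂ) (b : R), br n (g' l) b = br n (g (n - l)) b := by
  constructor
  · rintro ⟨N, c, h1, h2⟩ l n b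
    rw [h1, h2, sum_negShift h]
  · intro H
    obtain ⟨N, c, hc⟩ := hg
    refine ⟨N, c, hc, fun l => center_ext h hcenter fun n b => ?_⟩
    rw [H, hc, sum_negShift h]

theorem sub2_X (P : CPoly2) (l d : ℂ) :
    (sub2 P (Polynomial.C l) Polynomial.X).eval d = ev2 P l d := by
  unfold sub2 ev2
  have : (Polynomial.aeval (Polynomial.X : Polynomial ℂ)).toRingHom
      = RingHom.id (Polynomial ℂ) := by
    ext <;> simp
  rw [this]
  rfl

theorem ev2_smul (P : CPoly2) (β l d : ℂ) : ev2 (β • P) l d = β * ev2 P l d := by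
  unfold ev2
  rw [Polynomial.eval_smul]
  simp

theorem fc_DT (h : IsLeibnizConformal DR br) {F : FCData R DR} (hF : IsFC DR br F)
    (l n : ℂ) (a b : R) : br n (F.Dm l a) b = - br n (F.Tm (n - l) a) b := by
  obtain ⟨_, h2, h3, _⟩ := hF
  have e := (h2 l (n - l) a b).symm.trans (h3 l (n - l) a b)
  rw [add_sub_cancel, sub_eq_add_neg] at e
  rw [← add_left_cancel e, neg_neg]

theorem fc_via_iff (h : IsLeibnizConformal DR br)
    (hcenter : ∀ a : R, (∀ (l : ℂ) (b : R), br l a b = 0) → a = 0)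
    {F F' : FCData R DR} (hF : IsFC DR br F) (hF' : IsFC DR br F') (u₀ : R) (β : ℂ) :
    FCEquivVia DR br F F' u₀ β ↔
      ((∀ (l : ℂ) (a : R), F.Tm l a = br l u₀ a + β • F'.Tm l a) ∧
        F.P = β • F'.P ∧
        (∀ a : R, IsNegShift DR (fun l => br l u₀ a) (fun l => -(br l a u₀)))) := by
  have key : ∀ a : R, IsNegShift DR (fun l => br l u₀ a) (fun l => -(br l a u₀)) ↔
      ∀ (l n : ℂ) (b : R), br n (-(br l a u₀)) b = br n (br (n - l) u₀ a) b :=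
    fun a => negShift_iff h hcenter (h.bilin.poly u₀ a)
  have bneg : ∀ (n : ℂ) (x b : R), br n (-x) b = - br n x b :=
    fun n x b => map_neg (brL h n b) x
  have bsub : ∀ (n : ℂ) (x y b : R), br n (x - y) b = br n x b - br n y b :=
    fun n x y b => map_sub (brL h n b) x y
  constructor
  · rintro ⟨hD, hT, hP, -⟩
    refine ⟨hT, hP, fun a => (key a).2 fun l n b => ?_⟩
    have e := fc_DT h hF l n a b
    have e' := fc_DT h hF' l n a b
    rw [hD, hT, h.bilin.add_left, h.bilin.add_left, h.bilin.smul_left, h.bilin.smul_left, e'] at e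
    rw [bneg]
    linear_combination (norm := module) (-1 : ℂ) • e
  · rintro ⟨hT, hP, hN⟩
    refine ⟨fun l a => center_ext h hcenter fun n b => ?_, hT, hP,
      fun l => center_ext h hcenter fun n b => ?_⟩
    · have e := (key a).1 (hN a) l n b
      rw [bneg] at e
      rw [fc_DT h hF, hT, h.bilin.add_left, h.bilin.add_left, h.bilin.smul_left,
        h.bilin.smul_left, fc_DT h hF', ← e]
      module
    · obtain ⟨m, rfl⟩ : ∃ m, n = l + m := ⟨n - l, by ring⟩
      obtain ⟨-, -, -, -, -, -, h7, -⟩ := hF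
      obtain ⟨-, h2', h3', -, -, -, h7', -⟩ := hF'
      have e := h7 l m b
      have e7 := h7' l m b
      have j := h.jacobi l m u₀ u₀ b
      have e2 := h2' l m u₀ b
      have e3 := h3' m l u₀ b
      rw [add_comm m l] at e3
      rw [bsub, h.bilin.add_left, h.bilin.add_left, h.bilin.add_left, h.bilin.smul_left,
        h.bilin.smul_left, h.bilin.smul_left, br_aeval h, sub2_X]
      have hd : -(l + m) = -l - m := by ring
      rw [hd, hP, ev2_smul]
      rw [hP, ev2_smul] at e
      simp only [hT, h.bilin.add_right, h.bilin.smul_right, (F'.Tm_lin _).map_add,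
        (F'.Tm_lin _).map_smul] at e
      rw [j, e2, e3] at e
      linear_combination (norm := module) (1 : ℂ) • e - (β ^ 2) • e7

end FCHelpers

/-- Let `R = ℂ[∂]V` be a Leibniz conformal algebra with trivial left-center
and `Q = ℂ[∂]x` free of rank one.  Two flag datums in `FC(R)` are equivalent iff there
exist `u₀ ∈ R` and `β ≠ 0` with `T_λ(a) = [u₀_λ a] + β T'_λ(a)`, `P = β P'` and
`[a_λ u₀] = -[u₀_{-λ-∂} a]`; they are cohomologous iff this holds with `β = 1`. -/
theorem fc_equiv_iff_of_trivial_left_center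
    {R Q : Type*} [AddCommGroup R] [Module ℂ R] [AddCommGroup Q] [Module ℂ Q]
    (DR : Module.End ℂ R) (DQ : Module.End ℂ Q)
    (br : ℂ → R → R → R) (hLeib : IsLeibnizConformal DR br)
    (hcenter : ∀ a : R, (∀ (l : ℂ) (b : R), br l a b = 0) → a = 0)
    (ι : Type*) (v : ι → R)
    (hRfree : ∀ a : R, ∃! c : ι →₀ Polynomial ℂ,
      (c.sum fun i p => Polynomial.aeval DR p (v i)) = a)
    (x : Q) (hQfree : ∀ q : Q, ∃! p : Polynomial ℂ, Polynomial.aeval DQ p x = q)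
    (F F' : FCData R DR) (hF : IsFC DR br F) (hF' : IsFC DR br F') :
    ((∃ (u₀ : R) (β : ℂ), β ≠ 0 ∧ FCEquivVia DR br F F' u₀ β) ↔
      (∃ (u₀ : R) (β : ℂ), β ≠ 0 ∧
        (∀ (l : ℂ) (a : R), F.Tm l a = br l u₀ a + β • F'.Tm l a) ∧
        F.P = β • F'.P ∧
        (∀ a : R, IsNegShift DR (fun l => br l u₀ a) (fun l => -(br l a u₀))))) ∧
    ((∃ u₀ : R, FCEquivVia DR br F F' u₀ 1) ↔
      (∃ u₀ : R,
        (∀ (l : ℂ) (a : R), F.Tm l a = br l u₀ a + F'.Tm l a) ∧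
        F.P = F'.P ∧
        (∀ a : R, IsNegShift DR (fun l => br l u₀ a) (fun l => -(br l a u₀))))) := by
  simp only [fc_via_iff hLeib hcenter hF hF', one_smul]
  exact ⟨trivial, trivial⟩
end
end

section
/- Let R = ℂ[∂]V be a Lie conformal algebra with trivial left-center and Q = ℂ[∂]x a Leibniz conformal algebra of rank 1 which is either abelian or the Virasoro Lie conformal algebra. If every conformal derivation of R is inner (CDer(R) = CInn(R)), then LHC²_R(Q,R) and LHC²(Q,R) each consist of a single class, namely the class of the trivial flag datum (D, T, Q₀) = (0, 0, 0) (with P = 0 in the abelian case and P = ∂ + 2λ in the Virasoro case). -/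
noncomputable section

open Polynomial

/-- A conformal derivation of the Leibniz conformal algebra `(R, D, br)`. -/
structure IsConformalDerivation {R : Type*} [AddCommGroup R] [Module ℂ R]
    (D : Module.End ℂ R) (br : ℂ → R → R → R) (T : ℂ → R → R) : Prop where
  map_add : ∀ (l : ℂ) (a a' : R), T l (a + a') = T l a + T l a'
  map_smul : ∀ (l c : ℂ) (a : R), T l (c • a) = c • T l a
  poly : ∀ a : R, IsPolyFun (fun l => T l a)
  conf : ∀ (l : ℂ) (a : R), T l (D a) = D (T l a) + l • T l a
  der : ∀ (l m : ℂ) (a b : R), T l (br m a b) = br (l + m) (T l a) b + br m a (T l b)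

/-- A conformal anti-derivation of the Leibniz conformal algebra `(R, D, br)`. -/
structure IsConformalAntiDerivation {R : Type*} [AddCommGroup R] [Module ℂ R]
    (D : Module.End ℂ R) (br : ℂ → R → R → R) (T : ℂ → R → R) : Prop where
  map_add : ∀ (l : ℂ) (a a' : R), T l (a + a') = T l a + T l a'
  map_smul : ∀ (l c : ℂ) (a : R), T l (c • a) = c • T l a
  poly : ∀ a : R, IsPolyFun (fun l => T l a)
  conf : ∀ (l : ℂ) (a : R), T l (D a) = (-l) • T l a
  antider : ∀ (l m : ℂ) (a b : R),
    T (l + m) (br l a b) = br l a (T m b) - br m b (T l a)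

/-- Conformal skew-symmetry `[a_λ b] = -[b_{-λ-∂} a]`; a Lie conformal algebra is a
Leibniz conformal algebra whose bracket is skew-symmetric. -/
def IsSkewSymmBr {R : Type*} [AddCommGroup R] [Module ℂ R] (D : Module.End ℂ R)
    (br : ℂ → R → R → R) : Prop :=
  ∀ a b : R, IsNegShift D (fun l => br l a b) (fun l => -(br l b a))

open Polynomial in
/-- The polynomial `∂ + 2λ ∈ ℂ[λ,∂]` (inner variable `∂`, outer variable `λ`). -/
noncomputable def virasoroP : CPoly2 :=
  Polynomial.C Polynomial.X + (2 : ℂ) • Polynomial.X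

/-- Let `R = ℂ[∂]V` be a Lie conformal algebra with trivial left-center and
`Q = ℂ[∂]x` a rank-one Leibniz conformal algebra which is abelian or Virasoro.  If every
conformal derivation of `R` is inner, then `LHC²_R(Q,R)` and `LHC²(Q,R)` consist of the
single class of the trivial flag datum `(0,0,0,P₀)`: every flag datum in `FC(R)` with
`P = P₀` is cohomologous (hence also equivalent, with `β = 1`) to `(0,0,0,P₀)`. -/
theorem lhc_trivial_of_cder_eq_cinn
    {R Q : Type*} [AddCommGroup R] [Module ℂ R] [AddCommGroup Q] [Module ℂ Q]
    (DR : Module.End ℂ R) (DQ : Module.End ℂ Q)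
    (br : ℂ → R → R → R) (hLeib : IsLeibnizConformal DR br)
    (hskew : IsSkewSymmBr DR br)
    (hcenter : ∀ a : R, (∀ (l : ℂ) (b : R), br l a b = 0) → a = 0)
    (ι : Type*) (v : ι → R)
    (hRfree : ∀ a : R, ∃! c : ι →₀ Polynomial ℂ,
      (c.sum fun i p => Polynomial.aeval DR p (v i)) = a)
    (x : Q) (hQfree : ∀ q : Q, ∃! p : Polynomial ℂ, Polynomial.aeval DQ p x = q)
    (bq : ℂ → Q → Q → Q) (hbq : IsLeibnizConformal DQ bq)
    (hCDerInn : ∀ T : ℂ → R → R, IsConformalDerivation DR br T →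
      ∃ c : R, ∀ (l : ℂ) (a : R), T l a = br l c a)
    (P₀ : CPoly2)
    (hcase :
      ((∀ (l : ℂ) (y z : Q), bq l y z = 0) ∧ P₀ = 0) ∨
      ((∀ l : ℂ, bq l x x = DQ x + (2 * l) • x) ∧ P₀ = virasoroP)) :
    ∀ F : FCData R DR, IsFC DR br F → F.P = P₀ →
      ∃ u₀ : R,
        (∀ (l : ℂ) (a : R), F.Dm l a = br l a u₀) ∧
        (∀ (l : ℂ) (a : R), F.Tm l a = br l u₀ a) ∧
        (∀ l : ℂ, F.Q0 l
          = br l u₀ u₀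
            - Polynomial.aeval DR (sub2 F.P (Polynomial.C l) Polynomial.X) u₀) := by
  intro F hF _
  obtain ⟨-, h2, h3, -, -, -, h7, -⟩ := hF
  have hb := hLeib.bilin
  let B : ℂ → R → R →ₗ[ℂ] R := fun l b =>
    { toFun := fun a => br l a b
      map_add' := fun a a' => hb.add_left l a a' b
      map_smul' := fun c a => hb.smul_left l c a b }
  have hB : ∀ l a b, br l a b = B l b a := fun _ _ _ => rfl
  -- trivial left-center, in the form used below
  have key : ∀ a a' : R, (∀ (n : ℂ) (b : R), br n a b = br n a' b) → a = a' := by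
    intro a a' h
    refine sub_eq_zero.mp (hcenter _ fun l b => ?_)
    have := h l b
    rw [hB, hB] at this
    rw [hB, map_sub, this, sub_self]
  have haeval : ∀ (p : Polynomial ℂ) (l : ℂ) (a b : R),
      br l (Polynomial.aeval DR p a) b = p.eval (-l) • br l a b := by
    intro p l a b
    induction p using Polynomial.induction_on' with
    | add p q hp hq =>
      rw [map_add, LinearMap.add_apply, hb.add_left, hp, hq, Polynomial.eval_add, add_smul]
    | monomial n c =>
      rw [Polynomial.aeval_monomial, Polynomial.eval_monomial, Module.End.mul_apply,
        Module.algebraMap_end_apply, hb.smul_left, mul_smul]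
      congr 1
      induction n with
      | zero => simp
      | succ n ih =>
        rw [pow_succ', Module.End.mul_apply, hb.conf_left, ih, smul_smul, pow_succ']
  obtain ⟨u, hu⟩ := hCDerInn F.Tm
    { map_add := fun l => (F.Tm_lin l).map_add
      map_smul := fun l => (F.Tm_lin l).map_smul
      poly := F.Tm_poly
      conf := F.Tm_conf
      der := fun l m a b => by rw [h3 m l a b, add_comm l m, add_comm] }
  refine ⟨u, ?_, hu, ?_⟩
  · intro l a
    refine key _ _ fun n b => ?_
    obtain ⟨m, rfl⟩ : ∃ m, n = l + m := ⟨n - l, by ring⟩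
    have e : br (l + m) (F.Dm l a) b = - br (l + m) (F.Tm m a) b := by
      have e2 := h2 l m a b
      rw [h3 l m a b, sub_eq_add_neg] at e2
      rw [add_left_cancel e2, neg_neg]
    obtain ⟨N, c, hc, hc'⟩ := hskew u a
    have hc1 := hc m
    have hc2 := hc' l
    simp only at hc1 hc2
    rw [e, hu, hc1, ← neg_neg (br l a u), hc2, hB, hB, map_neg, map_sum, map_sum]
    congr 1
    refine Finset.sum_congr rfl fun i _ => ?_
    have hp : ((-l) • (1 : Module.End ℂ R) - DR) ^ i
        = Polynomial.aeval DR ((Polynomial.C (-l) - Polynomial.X) ^ i) := by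
      rw [map_pow, map_sub, Polynomial.aeval_C, Polynomial.aeval_X, Algebra.algebraMap_eq_smul_one]
    rw [hp, ← hB, ← hB, haeval, hb.smul_left]
    congr 1
    simp
  · intro l
    refine key _ _ fun n b => ?_
    obtain ⟨m, rfl⟩ : ∃ m, n = l + m := ⟨n - l, by ring⟩
    have e7 := h7 l m b
    rw [hu, hu, hu, hu, hu, hLeib.jacobi l m u u b] at e7
    have hs : (sub2 F.P (Polynomial.C l) Polynomial.X).eval (-(l + m))
        = ev2 F.P l (-l - m) := by
      have h1 : (Polynomial.aeval (Polynomial.X : Polynomial ℂ)).toRingHom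
          = RingHom.id (Polynomial ℂ) := by
        ext <;> simp
      unfold sub2 ev2
      rw [h1, neg_add', Polynomial.eval₂_id]
    have : br (l + m) (br l u u - Polynomial.aeval DR
        (sub2 F.P (Polynomial.C l) Polynomial.X) u) b
        = br (l + m) (br l u u) b - ev2 F.P l (-l - m) • br (l + m) u b := by
      rw [← hs, ← haeval, hB, map_sub]
      rfl
    rw [this, e7]
    abel
end
end

section
/- Let R and Q be two Leibniz conformal algebras and set E = R ⊕ Q (direct sum of ℂ[∂]-modules). Suppose E carries a Leibniz conformal algebra structure such that both R and Q are subalgebras of E. Then E is isomorphic, via an isomorphism stabilizing R and co-stabilizing Q, to a bicrossed product R♮^{◁,▷}_{↼,⇀} Q. -/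
noncomputable section

/-- A module `(M, lact, ract)` over a Leibniz conformal algebra `(L, DL, brL)`:
two conformal bilinear actions satisfying the three module axioms. -/
structure IsLCModule {L M : Type*}
    [AddCommGroup L] [Module ℂ L] [AddCommGroup M] [Module ℂ M]
    (DL : Module.End ℂ L) (DM : Module.End ℂ M)
    (brL : ℂ → L → L → L) (lact : ℂ → L → M → M) (ract : ℂ → M → L → M) : Prop where
  lact_bilin : IsConformalBilin DL DM DM lact
  ract_bilin : IsConformalBilin DM DL DM ract
  ax1 : ∀ (l m : ℂ) (a b : L) (x : M),
    lact l a (lact m b x) = lact (l + m) (brL l a b) x + lact m b (lact l a x)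
  ax2 : ∀ (l m : ℂ) (a b : L) (x : M),
    lact l a (ract m x b) = ract (l + m) (lact l a x) b + ract m x (brL l a b)
  ax3 : ∀ (l m : ℂ) (a b : L) (x : M),
    ract l x (brL m a b) = ract (l + m) (ract l x a) b + lact m a (ract l x b)

theorem IsConformalBilin.compLin {E U V W : Type*} [AddCommGroup E] [Module ℂ E]
    [AddCommGroup U] [Module ℂ U] [AddCommGroup V] [Module ℂ V] [AddCommGroup W] [Module ℂ W]
    {DE : Module.End ℂ E} {DU : Module.End ℂ U} {DV : Module.End ℂ V} {DW : Module.End ℂ W}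
    {f : ℂ → E → E → E} (hf : IsConformalBilin DE DE DE f)
    (i : U →ₗ[ℂ] E) (j : V →ₗ[ℂ] E) (p : E →ₗ[ℂ] W)
    (hi : ∀ u, i (DU u) = DE (i u)) (hj : ∀ v, j (DV v) = DE (j v))
    (hp : ∀ e, p (DE e) = DW (p e)) :
    IsConformalBilin DU DV DW (fun l u v => p (f l (i u) (j v))) where
  add_left := by intros; simp [hf.add_left]
  smul_left := by intros; simp [hf.smul_left]
  add_right := by intros; simp [hf.add_right]
  smul_right := by intros; simp [hf.smul_right]
  poly := by
    intro a b
    obtain ⟨N, c, h⟩ := hf.poly (i a) (j b)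
    refine ⟨N, fun k => p (c k), fun l => ?_⟩
    have := h l
    simp only at this
    simp [this]
  conf_left := by intros; simp [hi, hf.conf_left]
  conf_right := by intros; simp [hj, hp, hf.conf_right]

/-- If `E = R ⊕ Q` is a Leibniz conformal algebra such that both `R` and
`Q` are subalgebras of `E`, then `E` is isomorphic (via an isomorphism stabilizing `R`
and co-stabilizing `Q`, here the identity) to a bicrossed product
`R ♮^{◁,▷}_{↼,⇀} Q`. -/
theorem isomorphic_to_bicrossed_product_of_subalgebras
    {R Q : Type*} [AddCommGroup R] [Module ℂ R] [AddCommGroup Q] [Module ℂ Q]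
    (DR : Module.End ℂ R) (DQ : Module.End ℂ Q)
    (br : ℂ → R → R → R) (hLeibR : IsLeibnizConformal DR br)
    (bq : ℂ → Q → Q → Q) (hLeibQ : IsLeibnizConformal DQ bq)
    (brE : ℂ → R × Q → R × Q → R × Q)
    (hE : IsLeibnizConformal (LinearMap.prodMap DR DQ) brE)
    (hsubR : ∀ (l : ℂ) (a b : R), brE l (a, 0) (b, 0) = (br l a b, 0))
    (hsubQ : ∀ (l : ℂ) (x y : Q), brE l (0, x) (0, y) = (0, bq l x y)) :
    ∃ (lh : ℂ → R → Q → R) (rh : ℂ → R → Q → Q)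
      (lt : ℂ → Q → R → Q) (rt : ℂ → Q → R → R),
      IsConformalBilin DR DQ DR lh ∧ IsConformalBilin DR DQ DQ rh ∧
      IsConformalBilin DQ DR DQ lt ∧ IsConformalBilin DQ DR DR rt ∧
      IsLCModule DR DQ br rh lt ∧
      IsLCModule DQ DR bq rt lh ∧
      IsLeibnizConformal (LinearMap.prodMap DR DQ)
        (unifiedBracket br lh rh lt rt (fun _ _ _ => 0) bq) ∧
      ∀ (l : ℂ) (u v : R × Q),
        unifiedBracket br lh rh lt rt (fun _ _ _ => 0) bq l u v = brE l u v := by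
  have B := hE.bilin
  have h1 : IsConformalBilin DR DQ DR (fun l a y => (brE l (a, 0) (0, y)).1) :=
    B.compLin (LinearMap.inl ℂ R Q) (LinearMap.inr ℂ R Q) (LinearMap.fst ℂ R Q)
      (by intro; simp) (by intro; simp) (by intro; simp)
  have h2 : IsConformalBilin DR DQ DQ (fun l a y => (brE l (a, 0) (0, y)).2) :=
    B.compLin (LinearMap.inl ℂ R Q) (LinearMap.inr ℂ R Q) (LinearMap.snd ℂ R Q)
      (by intro; simp) (by intro; simp) (by intro; simp)
  have h3 : IsConformalBilin DQ DR DQ (fun l x b => (brE l (0, x) (b, 0)).2) :=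
    B.compLin (LinearMap.inr ℂ R Q) (LinearMap.inl ℂ R Q) (LinearMap.snd ℂ R Q)
      (by intro; simp) (by intro; simp) (by intro; simp)
  have h4 : IsConformalBilin DQ DR DR (fun l x b => (brE l (0, x) (b, 0)).1) :=
    B.compLin (LinearMap.inr ℂ R Q) (LinearMap.inl ℂ R Q) (LinearMap.fst ℂ R Q)
      (by intro; simp) (by intro; simp) (by intro; simp)
  have sp : ∀ u : R × Q, u = (u.1, 0) + (0, u.2) := by intro u; simp
  have dl : ∀ l u v, brE l u v = brE l (u.1, 0) v + brE l (0, u.2) v := by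
    intro l u v
    rw [← B.add_left, ← sp]
  have dr : ∀ l u v, brE l u v = brE l u (v.1, 0) + brE l u (0, v.2) := by
    intro l u v
    rw [← B.add_right, ← sp]
  have key : ∀ (l : ℂ) (u v : R × Q),
      unifiedBracket br (fun l a y => (brE l (a, 0) (0, y)).1)
        (fun l a y => (brE l (a, 0) (0, y)).2) (fun l x b => (brE l (0, x) (b, 0)).2)
        (fun l x b => (brE l (0, x) (b, 0)).1) (fun _ _ _ => 0) bq l u v = brE l u v := by
    intro l u v
    rw [dl l u v, dr l (u.1, 0) v, dr l (0, u.2) v, hsubR, hsubQ]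
    ext <;> simp [unifiedBracket] <;> abel
  refine ⟨_, _, _, _, h1, h2, h3, h4, ⟨h2, h3, ?_, ?_, ?_⟩, ⟨h4, h1, ?_, ?_, ?_⟩, ?_, key⟩
  · intro l m a b x
    have J := congrArg Prod.snd (hE.jacobi l m (a, 0) (b, 0) (0, x))
    rw [dr l (a, 0), dr m (b, 0) (brE l _ _)] at J
    simpa [hsubR] using J
  · intro l m a b x
    have J := congrArg Prod.snd (hE.jacobi l m (a, 0) (0, x) (b, 0))
    rw [dr l (a, 0), dl (l + m)] at J
    simpa [hsubR] using J
  · intro l m a b x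
    have J := congrArg Prod.snd (hE.jacobi l m (0, x) (a, 0) (b, 0))
    rw [dl (l + m), dr m (a, 0) (brE l _ _)] at J
    simpa [hsubR] using J
  · intro l m a b x
    have J := congrArg Prod.fst (hE.jacobi l m (0, a) (0, b) (x, 0))
    rw [dr l (0, a), dr m (0, b) (brE l _ _)] at J
    simpa [hsubQ] using J
  · intro l m a b x
    have J := congrArg Prod.fst (hE.jacobi l m (0, a) (x, 0) (0, b))
    rw [dr l (0, a), dl (l + m)] at J
    simpa [hsubQ] using J
  · intro l m a b x
    have J := congrArg Prod.fst (hE.jacobi l m (x, 0) (0, a) (0, b))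
    rw [dl (l + m), dr m (0, a) (brE l _ _)] at J
    simpa [hsubQ] using J
  · have e : unifiedBracket br (fun l a y => (brE l (a, 0) (0, y)).1)
        (fun l a y => (brE l (a, 0) (0, y)).2) (fun l x b => (brE l (0, x) (b, 0)).2)
        (fun l x b => (brE l (0, x) (b, 0)).1) (fun _ _ _ => 0) bq = brE := by
      funext l u v
      exact key l u v
    rw [e]
    exact hE
end
end
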